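/- There exists a non-singular n(n−1)/2 × n(n−1)/2 matrix V over ℤ[t^{±1}, q^{±1}] such that for every n-braid β, K(β^rev) V = V K(β)^T, where β^rev is the braid obtained by reversing the order of the Artin generators in any word representing β. -/

import Mathlib

open Matrix

noncomputable section

/-- Braid relations among the Artin generators `σ_1, …, σ_{n-1}`
(indexed here by `Fin (n-1)`, with `i : Fin (n-1)` standing for `σ_{i+1}`). -/
def braidRels (n : ℕ) : Set (FreeGroup (Fin (n - 1))) :=
  {r | (∃ i j : Fin (n - 1), (i : ℕ) + 1 = (j : ℕ) ∧
          r = .of i * .of j * .of i * (.of j * .of i * .of j)⁻¹) ∨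
       (∃ i j : Fin (n - 1), (i : ℕ) + 2 ≤ (j : ℕ) ∧
          r = .of i * .of j * (.of j * .of i)⁻¹)}

/-- The braid group `B_n` as a presented group. -/
abbrev Braid (n : ℕ) := PresentedGroup (braidRels n)

/-- The Artin generator `σ_{i+1}` of `B_n`. -/
def σg {n : ℕ} (i : Fin (n - 1)) : Braid n := PresentedGroup.of i

/-- Index set `{(i,j) : 1 ≤ i < j ≤ n}` for the Lawrence–Krammer basis `X_{i,j}`. -/
abbrev BP (n : ℕ) := {p : Fin (n + 1) × Fin (n + 1) // 0 < (p.1 : ℕ) ∧ (p.1 : ℕ) < (p.2 : ℕ)}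

/-- The standard basis row vector `X_{a,b}`. -/
def ee {R : Type*} [CommRing R] (n a b : ℕ) : BP n → R :=
  fun c => if (c.val.1 : ℕ) = a ∧ (c.val.2 : ℕ) = b then 1 else 0

/-- The Lawrence–Krammer matrix of the Artin generator `σ_m` (1-based `m`),
with parameters `t`, `q`; row `(i,j)` is the expansion of `X_{i,j}·σ_m` in the basis. -/
def LKgen {R : Type*} [CommRing R] (t q : R) (n m : ℕ) : Matrix (BP n) (BP n) R :=
  fun r c =>
    let i := (r.val.1 : ℕ); let j := (r.val.2 : ℕ)
    if m = i ∧ j = i + 1 then -(t * q ^ 2) * ee n i j c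
    else if m = i then
      q * ee n (i + 1) j c + (1 - q) * ee n i j c + t * q * (1 - q) * ee n i (i + 1) c
    else if m = j then
      q * ee n i (j + 1) c + (1 - q) * ee n i j c - q * (1 - q) * ee n j (j + 1) c
    else if m + 1 = i then ee n (i - 1) j c
    else if m + 1 = j then ee n i (j - 1) c
    else ee n i j c

/-- The field `ℚ(t,q)` of rational functions in two variables. -/
abbrev F2 := FractionRing (MvPolynomial (Fin 2) ℚ)

/-- The variable `t` in `ℚ(t,q)`. -/
def tt : F2 := algebraMap (MvPolynomial (Fin 2) ℚ) F2 (MvPolynomial.X 0)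

/-- The variable `q` in `ℚ(t,q)`. -/
def qq : F2 := algebraMap (MvPolynomial (Fin 2) ℚ) F2 (MvPolynomial.X 1)

/-- The symmetric form `⟨X_{i,j}, X_{k,l}⟩` preserved by the Lawrence–Krammer generators,
written for natural-number indices. -/
def lkForm {R : Type*} [CommRing R] (t q : R) (n i j k l : ℕ) : R :=
  (q - 1) *
      (t ^ 2 * (if i = k then (q ^ (n - i)) ^ 2 else 0) + (if j = l then (q ^ (n - j)) ^ 2 else 0)
        - t * (if j = k then (q ^ (n - j)) ^ 2 else 0)
        - t * (if i = l then (q ^ (n - i)) ^ 2 else 0))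
    + (if i = k ∧ j = l then (t * q + 1) * (t - 1) * (q ^ (n - i) * q ^ (n - j)) else 0)

/-- The Gram matrix of `lkForm`. -/
def lkGram {R : Type*} [CommRing R] (t q : R) (n : ℕ) : Matrix (BP n) (BP n) R :=
  fun r c => lkForm t q n r.val.1 r.val.2 c.val.1 c.val.2

section Form

variable {R : Type*} [CommRing R] (t q : R) (n : ℕ)

theorem lkForm_comm (i j k l : ℕ) : lkForm t q n i j k l = lkForm t q n k l i j := by
  unfold lkForm
  grind

theorem sum_ee_mul {a b : ℕ} (ha : 0 < a) (hab : a < b) (hb : b ≤ n) (f : ℕ → ℕ → R) :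
    ∑ c : BP n, ee n a b c * f c.val.1 c.val.2 = f a b := by
  rw [Finset.sum_eq_single
    (⟨(⟨a, by omega⟩, ⟨b, by omega⟩), ha, hab⟩ : BP n)]
  · simp [ee]
  · rintro ⟨⟨c, d⟩, h⟩ _ hne
    have : ¬ ((c : ℕ) = a ∧ (d : ℕ) = b) := by
      rintro ⟨rfl, rfl⟩
      exact hne rfl
    simp [ee, this]
  · simp

/-- The value of `⟨X_{i,j}·σ_m, X_{k,l}⟩`, by cases on the position of `m`. -/
def lkFormGen (m i j k l : ℕ) : R :=
  if m = i ∧ j = i + 1 then -(t * q ^ 2) * lkForm t q n i j k l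
  else if m = i then
    q * lkForm t q n (i + 1) j k l + (1 - q) * lkForm t q n i j k l
      + t * q * (1 - q) * lkForm t q n i (i + 1) k l
  else if m = j then
    q * lkForm t q n i (j + 1) k l + (1 - q) * lkForm t q n i j k l
      - q * (1 - q) * lkForm t q n j (j + 1) k l
  else if m + 1 = i then lkForm t q n (i - 1) j k l
  else if m + 1 = j then lkForm t q n i (j - 1) k l
  else lkForm t q n i j k l

theorem LKgen_mul_lkGram_apply {m : ℕ} (hm : 0 < m) (hmn : m < n) (r s : BP n) :
    (LKgen t q n m * lkGram t q n) r s =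
      lkFormGen t q n m r.val.1 r.val.2 s.val.1 s.val.2 := by
  obtain ⟨⟨⟨i, hi⟩, ⟨j, hj⟩⟩, h0, hij⟩ := r
  obtain ⟨⟨⟨k, hk⟩, ⟨l, hl⟩⟩, h0', hkl⟩ := s
  simp only at h0 hij h0' hkl
  have key : ∀ a b : ℕ, 0 < a → a < b → b ≤ n →
      ∑ c : BP n, ee n a b c * lkForm t q n c.val.1 c.val.2 k l = lkForm t q n a b k l :=
    fun a b ha hab hb => sum_ee_mul n ha hab hb (fun x y => lkForm t q n x y k l)
  simp only [Matrix.mul_apply, LKgen, lkGram, lkFormGen]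
  split_ifs <;>
    (try simp only [add_mul, sub_mul, mul_assoc, Finset.sum_add_distrib, Finset.sum_sub_distrib,
      ← Finset.mul_sum]) <;>
    (repeat rw [key _ _ (by omega) (by omega) (by omega)])

set_option maxHeartbeats 2000000 in
theorem lkFormGen_comm {m i j k l : ℕ} (hmn : m < n) (hij : i < j) (hkl : k < l) :
    lkFormGen t q n m i j k l = lkFormGen t q n m k l i j := by
  have hq : q ^ (n - m) = q * q ^ (n - (m + 1)) := by
    rw [← pow_succ', show n - (m + 1) + 1 = n - m by omega]
  have position : ∀ x y : ℕ, x < y → (m = x ∧ m + 1 = y) ∨ (m = x ∧ m + 1 < y) ∨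
      (m = y ∧ x < m) ∨ (m + 1 = x ∧ m + 1 < y) ∨ (m + 1 = y ∧ x < m) ∨
      (x ≠ m ∧ x ≠ m + 1 ∧ y ≠ m ∧ y ≠ m + 1) := by
    omega
  rcases position i j hij with
      ⟨rfl, rfl⟩ | ⟨rfl, _⟩ | ⟨rfl, _⟩ | ⟨rfl, _⟩ | ⟨rfl, _⟩ | ⟨_, _, _, _⟩ <;>
    rcases position k l hkl with
      ⟨h, rfl⟩ | ⟨h, _⟩ | ⟨h, _⟩ | ⟨h, _⟩ | ⟨h, _⟩ | ⟨_, _, _, _⟩ <;>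
    (try subst h) <;>
    simp (disch := omega) only [lkFormGen, if_neg, Nat.add_sub_cancel] <;>
    first
    | exact lkForm_comm ..
    | (simp (disch := omega) only [lkForm, if_pos, if_neg, hq, true_and, and_true, if_true]
       try split_ifs) <;>
      first | omega | ring1 | (subst_vars; ring1)

theorem LKgen_mul_lkGram {m : ℕ} (hm : 0 < m) (hmn : m < n) :
    LKgen t q n m * lkGram t q n = lkGram t q n * (LKgen t q n m)ᵀ := by
  have hsymm : (lkGram t q n)ᵀ = lkGram t q n := by
    ext r s
    exact lkForm_comm ..
  ext r s
  rw [LKgen_mul_lkGram_apply t q n hm hmn, lkFormGen_comm t q n hmn r.2.2 s.2.2,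
    ← LKgen_mul_lkGram_apply t q n hm hmn, ← Matrix.transpose_apply (_ * _),
    Matrix.transpose_mul, hsymm]

theorem lkGram_mem (S : Subring R) (ht : t ∈ S) (hq : q ∈ S) (r c : BP n) :
    lkGram t q n r c ∈ S := by
  have hp : ∀ k, q ^ k ∈ S := fun k => S.pow_mem hq k
  have hite : ∀ (p : Prop) [Decidable p] (x : R), x ∈ S → (if p then x else 0) ∈ S := by
    intro p _ x hx
    split_ifs
    exacts [hx, S.zero_mem]
  unfold lkGram lkForm
  refine S.add_mem (S.mul_mem (S.sub_mem hq S.one_mem) (S.sub_mem (S.sub_mem (S.add_mem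
    (S.mul_mem (S.pow_mem ht 2) ?_) ?_) (S.mul_mem ht ?_)) (S.mul_mem ht ?_))) ?_ <;>
    apply hite
  iterate 4 exact S.pow_mem (hp _) 2
  exact S.mul_mem (S.mul_mem (S.add_mem (S.mul_mem ht hq) S.one_mem) (S.sub_mem ht S.one_mem))
    (S.mul_mem (hp _) (hp _))

theorem map_lkGram {S : Type*} [CommRing S] (f : R →+* S) :
    f.mapMatrix (lkGram t q n) = lkGram (f t) (f q) n := by
  ext r c
  simp [lkGram, lkForm, apply_ite f]

theorem lkGram_one : lkGram t 1 n = ((t + 1) * (t - 1)) • (1 : Matrix (BP n) (BP n) R) := by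
  ext r c
  have : ((r.val.1 : ℕ) = c.val.1 ∧ (r.val.2 : ℕ) = c.val.2) ↔ r = c := by
    simp [Subtype.ext_iff, Prod.ext_iff, Fin.ext_iff]
  simp [lkGram, lkForm, this, Matrix.one_apply]

end Form

theorem det_lkGram_ne_zero (n : ℕ) : (lkGram tt qq n).det ≠ 0 := by
  rw [tt, qq, ← map_lkGram, ← RingHom.map_det]
  intro h
  have h0 := (map_eq_zero_iff _ (IsFractionRing.injective (MvPolynomial (Fin 2) ℚ) F2)).1 h
  have h1 := congrArg (MvPolynomial.eval ![(2 : ℚ), 1]) h0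
  rw [RingHom.map_det, map_lkGram] at h1
  norm_num [lkGram_one, Matrix.det_smul] at h1

/-- If `V` intertwines `K` of each generator with its transpose, it intertwines `K` of the reverse
of any braid with the transpose of `K` of that braid. -/
theorem rev_intertwine_of_generators {n : ℕ} {ι F : Type*} [Fintype ι] [DecidableEq ι]
    [CommRing F] (K : Braid n →* GL ι F) (rev : Braid n →* (Braid n)ᵐᵒᵖ)
    (hrev : ∀ i : Fin (n - 1), rev (σg i) = MulOpposite.op (σg i)) (V : Matrix ι ι F)
    (hV : ∀ i : Fin (n - 1),
      (K (σg i) : Matrix ι ι F) * V = V * (K (σg i) : Matrix ι ι F)ᵀ) (β : Braid n) :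
    (K (rev β).unop : Matrix ι ι F) * V = V * (K β : Matrix ι ι F)ᵀ := by
  have hβ : β ∈ Subgroup.closure (Set.range (PresentedGroup.of (rels := braidRels n))) := by
    rw [PresentedGroup.closure_range_of]
    trivial
  induction hβ using Subgroup.closure_induction with
  | mem x hx =>
    obtain ⟨i, rfl⟩ := hx
    have h := hrev i
    rw [σg] at h
    rw [h]
    exact hV i
  | one => simp
  | mul x y _ _ hx hy =>
    simp only [map_mul, MulOpposite.unop_mul, Units.val_mul, Matrix.transpose_mul]
    rw [Matrix.mul_assoc, hx, ← Matrix.mul_assoc, hy, Matrix.mul_assoc]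
  | inv x _ hx =>
    have hinv : ((K x : GL ι F) : Matrix ι ι F)ᵀ * ((K x)⁻¹ : GL ι F).valᵀ = 1 := by
      rw [← Matrix.transpose_mul, ← Units.val_mul]
      simp
    simp only [map_inv, MulOpposite.unop_inv]
    calc ((K (rev x).unop)⁻¹ : GL ι F).val * V
        = ((K (rev x).unop)⁻¹ : GL ι F).val *
            (V * (K x : Matrix ι ι F)ᵀ) * ((K x)⁻¹ : GL ι F).valᵀ := by
          rw [Matrix.mul_assoc, Matrix.mul_assoc V, hinv, Matrix.mul_one]
      _ = V * ((K x)⁻¹ : GL ι F).valᵀ := by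
          rw [← hx, ← Matrix.mul_assoc, ← Units.val_mul]
          simp

/-- There is a non-singular matrix `V` over `ℤ[t^{±1}, q^{±1}]` such that
`K(β^rev) V = V K(β)ᵀ` for every braid `β`, where `β ↦ β^rev` is the anti-automorphism of
the braid group fixing each Artin generator (encoded as a homomorphism into the opposite
group sending each generator `σ_i` to `op σ_i`). -/
theorem lk_reverse_transpose (n : ℕ) (K : Braid n →* GL (BP n) F2)
    (hK : ∀ m : Fin (n - 1),
      (K (σg m) : Matrix (BP n) (BP n) F2) = LKgen tt qq n ((m : ℕ) + 1))
    (rev : Braid n →* (Braid n)ᵐᵒᵖ)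
    (hrev : ∀ i : Fin (n - 1), rev (σg i) = MulOpposite.op (σg i)) :
    ∃ V : Matrix (BP n) (BP n) F2,
      (∀ r c, V r c ∈ Subring.closure {tt, tt⁻¹, qq, qq⁻¹}) ∧
      V.det ≠ 0 ∧
      ∀ β : Braid n,
        (K (rev β).unop : Matrix (BP n) (BP n) F2) * V =
          V * (K β : Matrix (BP n) (BP n) F2)ᵀ := by
  refine ⟨lkGram tt qq n, fun r c => lkGram_mem tt qq n _ (Subring.subset_closure (by simp))
    (Subring.subset_closure (by simp)) r c, det_lkGram_ne_zero n,
    rev_intertwine_of_generators K rev hrev _ fun i => ?_⟩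
  rw [hK]
  exact LKgen_mul_lkGram tt qq n (by omega) (by omega)
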